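/- For every positive divisor n of e with n ≠ 2, there exists an irreducible complex representation of G = C ⋊ Γ of dimension n; that is, n ∈ cd(G). -/

import Mathlib

/-!
Since `Γ` is cyclic, every irreducible representation of `C ⋊ Γ` is induced from an extension of a
linear character `χ` of `C` to `C ⋊ Stab(χ)`, so the dimensions are the sizes of the `Γ`-orbits on
the dual of `C`. Only one direction is needed: the orbit of `χ` indexes a basis of a monomial
representation, which is simple by Schur's lemma because the characters in an orbit are distinct
and permuted transitively (`simple_monomialRep`).

The Frobenius acts on `C` by `x ↦ x ^ q`, so the orbit of `χ` has size the multiplicative order of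
`q` modulo the order of `χ` (`card_orbit_eq_orderOf`). For `n = 1` take `χ = 1`. For `n ≥ 3` take
`χ` of prime order `r`, where `r` is a prime with `q` of order exactly `n` modulo `r`; such an `r`
divides `q ^ e - 1` and not `q - 1`, hence divides `|C|`. Its existence is Zsigmondy's theorem
(`exists_prime_orderOf_eq`), for which `q ≥ 3` leaves no exception with `n ≥ 3`. If there were no
such prime, then only one prime `r` would divide `Φ_n(q)`, and only to the first power, whereas
`Φ_n(q) > (q - 1) ^ φ(n) ≥ 2 ^ (r - 1) ≥ r`.
-/

open CategoryTheory

/-! ### Primitive prime divisors of `q ^ n - 1` -/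

/-- A prime divisor `r` of `Φ_n(q)` that is not primitive divides `n`, and the part `m` of `n`
prime to `r`, which is the order of `q` modulo `r`, divides `r - 1`. -/
theorem dvd_and_order_dvd_of_dvd_cyclotomic {q n r : ℕ} (hr : r.Prime) (hn : 0 < n)
    (h : (r : ℤ) ∣ (Polynomial.cyclotomic n ℤ).eval (q : ℤ))
    (hord : orderOf (q : ZMod r) ≠ n) :
    ∃ k m, 0 < k ∧ n = r ^ k * m ∧ m ∣ r - 1 ∧ (q : ZMod r) ^ m = 1 ∧ ¬ r ∣ m := by
  have := Fact.mk hr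
  obtain ⟨k, m, hm, hnm⟩ := Nat.exists_eq_pow_mul_and_not_dvd hn.ne' r hr.ne_one
  have hroot : (Polynomial.cyclotomic (r ^ k * m) (ZMod r)).IsRoot (q : ZMod r) := by
    rw [← hnm, Polynomial.IsRoot.def]
    have := Polynomial.cyclotomic.eval_apply (q : ℤ) n (Int.castRingHom (ZMod r))
    simp only [eq_intCast, Int.cast_natCast] at this
    rw [this]
    exact (ZMod.intCast_zmod_eq_zero_iff_dvd _ _).2 h
  have : NeZero (m : ZMod r) := ⟨fun h0 => hm ((ZMod.natCast_eq_zero_iff _ _).1 h0)⟩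
  rw [Polynomial.isRoot_cyclotomic_prime_pow_mul_iff_of_charP] at hroot
  have hm0 : m ≠ 0 := by rintro rfl; simp at hm
  refine ⟨k, m, ?_, hnm, ?_, hroot.pow_eq_one, hm⟩
  · rcases Nat.eq_zero_or_pos k with rfl | hk
    · exact absurd (by rw [← hroot.eq_orderOf, hnm]; simp) hord
    · exact hk
  · refine hroot.dvd_of_pow_eq_one _ (ZMod.pow_card_sub_one_eq_one ?_)
    intro h0
    have := hroot.pow_eq_one
    rw [h0, zero_pow hm0] at this
    exact zero_ne_one this

/-- A non-primitive prime divisor of `Φ_n(q)` is the largest prime factor of `n`; by symmetry, there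
is at most one such prime. -/
theorem le_of_dvd_cyclotomic {q n r r' : ℕ} (hr : r.Prime) (hr' : r'.Prime) (hn : 0 < n)
    (h : (r : ℤ) ∣ (Polynomial.cyclotomic n ℤ).eval (q : ℤ))
    (hord : orderOf (q : ZMod r) ≠ n)
    (h' : (r' : ℤ) ∣ (Polynomial.cyclotomic n ℤ).eval (q : ℤ))
    (hord' : orderOf (q : ZMod r') ≠ n) : r' ≤ r := by
  by_contra hlt
  obtain ⟨k, m, -, hnm, hm, -⟩ := dvd_and_order_dvd_of_dvd_cyclotomic hr hn h hord
  obtain ⟨k', m', hk', hnm', -⟩ := dvd_and_order_dvd_of_dvd_cyclotomic hr' hn h' hord'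
  have h1 : r' ∣ r ^ k * m := hnm ▸ hnm' ▸ (dvd_pow_self r' hk'.ne').mul_right m'
  rcases hr'.dvd_mul.1 h1 with h2 | h2
  · exact hlt (Nat.le_of_dvd hr.pos (hr'.dvd_of_dvd_pow h2))
  · have := Nat.le_of_dvd (Nat.sub_pos_of_lt hr.one_lt) (h2.trans hm)
    omega

/-- A non-primitive prime divisor `r` of `Φ_n(q)` divides it only once: with `x = q ^ (n / r)`,
`Φ_n(q)` divides `(x ^ r - 1) / (x - 1)`, where `x` is `1` modulo `r`. -/
theorem not_sq_dvd_cyclotomic {q n r : ℕ} (hr : r.Prime) (hn : 3 ≤ n) (hq : 2 ≤ q)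
    (h : (r : ℤ) ∣ (Polynomial.cyclotomic n ℤ).eval (q : ℤ))
    (hord : orderOf (q : ZMod r) ≠ n) :
    ¬ (r : ℤ) ^ 2 ∣ (Polynomial.cyclotomic n ℤ).eval (q : ℤ) := by
  intro hsq
  have := Fact.mk hr
  obtain ⟨k, m, hk, hnm, hm, hqm, -⟩ :=
    dvd_and_order_dvd_of_dvd_cyclotomic hr (by omega) h hord
  obtain ⟨j, rfl⟩ : ∃ j, k = j + 1 := ⟨k - 1, by omega⟩
  set d := r ^ j * m with hd
  have hnd : n = d * r := by rw [hnm, hd]; ring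
  have hd0 : 0 < d := by
    rcases Nat.eq_zero_or_pos d with h0 | h0
    · rw [h0] at hnd; omega
    · exact h0
  have hdn : d ∈ n.properDivisors := by
    rw [Nat.mem_properDivisors]
    exact ⟨⟨r, hnd⟩, by rw [hnd]; exact lt_mul_of_one_lt_right hd0 hr.one_lt⟩
  obtain ⟨P, hP⟩ := Polynomial.X_pow_sub_one_mul_cyclotomic_dvd_X_pow_sub_one_of_dvd ℤ hdn
  have hPe := congrArg (Polynomial.eval (q : ℤ)) hP
  simp only [Polynomial.eval_mul, Polynomial.eval_sub, Polynomial.eval_pow, Polynomial.eval_X,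
    Polynomial.eval_one] at hPe
  set x : ℤ := (q : ℤ) ^ d with hx
  have hxr : (q : ℤ) ^ n = x ^ r := by rw [hnd, hx, pow_mul]
  rw [hxr] at hPe
  have hx1 : (r : ℤ) ∣ x - 1 := by
    rw [← ZMod.intCast_zmod_eq_zero_iff_dvd]
    rw [hx, hd, mul_comm, pow_mul]
    push_cast
    rw [hqm]; simp
  have hxgt : 1 < x := one_lt_pow₀ (by exact_mod_cast hq) hd0.ne'
  have hdiv : (r : ℤ) ^ 2 * (x - 1) ∣ x ^ r - 1 := by
    rw [hPe, mul_comm]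
    exact (mul_dvd_mul_left _ hsq).mul_right _
  have hxnd : ¬ (r : ℤ) ∣ x := by
    intro hh
    have := dvd_sub hh hx1
    rw [sub_sub_cancel] at this
    exact (Nat.prime_iff_prime_int.1 hr).not_isUnit (isUnit_of_dvd_one this)
  rcases hr.eq_two_or_odd' with rfl | hodd
  · -- here `m = 1`, so `n ≥ 4` is a power of two and `x` is an odd square
    have hm1 : m = 1 := Nat.dvd_one.1 hm
    have hj : j ≠ 0 := by rintro rfl; simp [hm1] at hnm; omega
    obtain ⟨i, rfl⟩ := Nat.exists_eq_succ_of_ne_zero hj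
    have hxy : x = ((q : ℤ) ^ (2 ^ i)) ^ 2 := by
      rw [hx, hd, hm1, ← pow_mul]; congr 1; rw [pow_succ]; ring
    have h4 : (4 : ℤ) ∣ x + 1 := by
      have h5 : (x - 1) * 4 ∣ (x - 1) * (x + 1) := by
        have : (x - 1) * (x + 1) = x ^ 2 - 1 := by ring
        rw [this]; simpa [mul_comm] using hdiv
      exact (mul_dvd_mul_iff_left (by omega)).1 h5
    rw [hxy] at h4
    generalize (q : ℤ) ^ (2 ^ i) = y at h4
    obtain ⟨t, rfl | rfl⟩ := Int.even_or_odd' y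
    · ring_nf at h4; omega
    · ring_nf at h4; omega
  · -- lifting the exponent: `x ^ r - 1` has only one more factor `r` than `x - 1`
    have hL := Int.emultiplicity_pow_sub_pow hr hodd (x := x) (y := 1) hx1 hxnd r
    have hfin : FiniteMultiplicity (r : ℤ) (x - 1) :=
      Int.finiteMultiplicity_iff.2 ⟨by simpa using hr.ne_one, by omega⟩
    have h2 := emultiplicity_le_emultiplicity_of_dvd_right (a := (r : ℤ)) hdiv
    rw [one_pow] at hL
    rw [hL, emultiplicity_mul (Nat.prime_iff_prime_int.1 hr),
      emultiplicity_pow_self_of_prime (Nat.prime_iff_prime_int.1 hr),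
      hfin.emultiplicity_eq_multiplicity,
      (Nat.finiteMultiplicity_iff.2 ⟨hr.ne_one, hr.pos⟩ :
        FiniteMultiplicity r r).emultiplicity_self] at h2
    have h3 : 2 + multiplicity (r : ℤ) (x - 1) ≤ multiplicity (r : ℤ) (x - 1) + 1 := by
      exact_mod_cast h2
    omega

/-- Zsigmondy's theorem for base `q ≥ 3` and exponent `n ≥ 3`. -/
theorem exists_prime_orderOf_eq {q n : ℕ} (hq : 3 ≤ q) (hn : 3 ≤ n) :
    ∃ r : ℕ, r.Prime ∧ orderOf (q : ZMod r) = n := by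
  by_contra! hno
  set Q := (Polynomial.cyclotomic n ℤ).eval (q : ℤ) with hQ
  have hbound : ((q : ℝ) - 1) ^ n.totient < (Q : ℝ) := by
    have h := Polynomial.sub_one_pow_totient_lt_cyclotomic_eval (n := n) (q := (q : ℝ))
      (by omega) (by exact_mod_cast (by omega : 1 < q))
    have := Polynomial.cyclotomic.eval_apply (q : ℤ) n (Int.castRingHom ℝ)
    simp only [eq_intCast, Int.cast_natCast] at this
    rwa [this] at h
  have hbound' : (2 : ℤ) ^ n.totient < Q := by
    have h2 : (2 : ℝ) ≤ (q : ℝ) - 1 := by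
      have : (3 : ℝ) ≤ q := by exact_mod_cast hq
      linarith
    have := (pow_le_pow_left₀ (by norm_num) h2 n.totient).trans_lt hbound
    exact_mod_cast this
  have hQ1 : 1 < Q := lt_of_le_of_lt (one_le_pow₀ (by norm_num)) hbound'
  lift Q to ℕ using by omega with N hN
  obtain ⟨r, hr, hrN⟩ := Nat.exists_prime_and_dvd (n := N) (by rintro rfl; simp at hQ1)
  have hrQ : (r : ℤ) ∣ (Polynomial.cyclotomic n ℤ).eval (q : ℤ) := by
    rw [← hQ]; exact_mod_cast hrN
  obtain ⟨k, m, hk, hnm, -⟩ :=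
    dvd_and_order_dvd_of_dvd_cyclotomic hr (by omega) hrQ (hno r hr)
  have hrlt : r < N := by
    have h1 : r - 1 ∣ n.totient := by
      rw [← Nat.totient_prime hr]
      exact Nat.totient_dvd_of_dvd (hnm ▸ (dvd_pow_self r hk.ne').mul_right m)
    have h2 : r - 1 ≤ n.totient := Nat.le_of_dvd (Nat.totient_pos.2 (by omega)) h1
    have h3 : r - 1 < 2 ^ (r - 1) := Nat.lt_two_pow_self
    have h4 : 2 ^ (r - 1) ≤ 2 ^ n.totient := Nat.pow_le_pow_right (by norm_num) h2
    have h5 : 2 ^ n.totient < N := by exact_mod_cast hbound'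
    omega
  obtain ⟨s, rfl⟩ := hrN
  obtain ⟨r', hr', hrs⟩ := Nat.exists_prime_and_dvd (n := s) (by rintro rfl; simp at hrlt)
  have hrQ' : (r' : ℤ) ∣ (Polynomial.cyclotomic n ℤ).eval (q : ℤ) := by
    rw [← hQ]; exact_mod_cast hrs.mul_left r
  have heq : r' = r := le_antisymm
    (le_of_dvd_cyclotomic hr hr' (by omega) hrQ (hno r hr) hrQ' (hno r' hr'))
    (le_of_dvd_cyclotomic hr' hr (by omega) hrQ' (hno r' hr') hrQ (hno r hr))
  subst heq
  refine not_sq_dvd_cyclotomic hr hn (by omega) hrQ (hno r' hr) ?_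
  rw [← hQ, sq]
  exact_mod_cast Nat.mul_dvd_mul_left r' hrs

/-! ### Monomial representations of semidirect products -/

/-- The action of `H` on the linear characters of `N` induced by `φ : H →* MulAut N`, namely
`(h • χ) x = χ (φ h⁻¹ x)`. -/
@[reducible]
def charAction {N H A : Type*} [Group N] [Group H] [CommGroup A] (φ : H →* MulAut N) :
    MulAction H (N →* A) where
  smul h χ := χ.comp (φ h⁻¹).toMonoidHom
  one_smul χ := by ext x; change χ (φ 1⁻¹ x) = χ x; simp
  mul_smul g h χ := by
    ext x
    change χ (φ (g * h)⁻¹ x) = χ (φ h⁻¹ (φ g⁻¹ x))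
    simp

section monomial

variable {N H O : Type} [Group N] [Group H] (φ : H →* MulAut N) [MulAction H O]
  (χ : O → N →* ℂˣ) (hχ : ∀ h o x, χ (h • o) x = χ o (φ h⁻¹ x))

/-- The monomial representation of `N ⋊[φ] H` on functions on `O`: the vector `δ_o` is an
eigenvector of `N` with character `χ o`, and `H` permutes the `δ_o`. When `χ` enumerates the
`H`-orbit of a linear character `λ` of `N`, this is the representation of `N ⋊[φ] H` induced from
the extension of `λ` to `N ⋊ Stab(λ)` that is trivial on `Stab(λ)`. -/
def monomialRep : Representation ℂ (N ⋊[φ] H) (O → ℂ) where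
  toFun g :=
    { toFun := fun f o => (χ o g.left : ℂ) * f (g.right⁻¹ • o)
      map_add' := fun f f' => by ext o; simp [mul_add]
      map_smul' := fun a f => by ext o; simp [mul_left_comm] }
  map_one' := by ext; simp
  map_mul' g g' := by
    refine LinearMap.ext fun f => funext fun o => ?_
    simp [hχ, mul_assoc, mul_smul]

@[simp]
theorem monomialRep_apply (g : N ⋊[φ] H) (f : O → ℂ) (o : O) :
    monomialRep φ χ hχ g f o = (χ o g.left : ℂ) * f (g.right⁻¹ • o) := rfl

/-- An endomorphism commuting with `N` is diagonal in the basis `δ_o`, since the characters `χ o`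
are distinct; commuting with the transitive action of `H` makes it a scalar. -/
theorem simple_monomialRep [Finite N] [Finite H] [Finite O] [MulAction.IsPretransitive H O]
    [Nonempty O] (hinj : Function.Injective χ) :
    Simple (FDRep.of (monomialRep φ χ hχ)) := by
  classical
  have := Fintype.ofFinite O
  have : Finite (N ⋊[φ] H) := Finite.of_equiv _ SemidirectProduct.equivProd.symm
  have : NeZero (Nat.card (N ⋊[φ] H) : ℂ) := ⟨by exact_mod_cast Nat.card_pos.ne'⟩
  obtain ⟨o₀⟩ := ‹Nonempty O›
  rw [FDRep.simple_iff_end_is_rank_one]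
  have key : ∀ T : (O → ℂ) →ₗ[ℂ] (O → ℂ),
      (∀ g f, T (monomialRep φ χ hχ g f) = monomialRep φ χ hχ g (T f)) →
      ∃ a : ℂ, ∀ f, T f = a • f := by
    intro T hT
    have hdiag : ∀ o o', o' ≠ o → T (Pi.single o 1) o' = 0 := by
      intro o o' hne
      by_contra hTo
      refine hne (hinj (MonoidHom.ext fun x => ?_))
      have h1 : monomialRep φ χ hχ (SemidirectProduct.inl x) (Pi.single o 1)
          = (χ o x : ℂ) • Pi.single o 1 := by
        ext p
        by_cases hp : p = o
        · subst hp; simp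
        · simp [hp]
      have h2 := congrFun (hT (SemidirectProduct.inl x) (Pi.single o 1)) o'
      rw [h1, map_smul] at h2
      simp only [Pi.smul_apply, smul_eq_mul, monomialRep_apply, SemidirectProduct.left_inl,
        SemidirectProduct.right_inl, inv_one, one_smul] at h2
      exact (Units.ext (mul_right_cancel₀ hTo h2)).symm
    refine ⟨T (Pi.single o₀ 1) o₀, fun f => ?_⟩
    have hbasis : ∀ o, T (Pi.single o 1) = T (Pi.single o₀ 1) o₀ • Pi.single o 1 := by
      intro o
      obtain ⟨h, rfl⟩ := MulAction.exists_smul_eq H o₀ o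
      have h1 : monomialRep φ χ hχ (SemidirectProduct.inr h) (Pi.single o₀ 1)
          = Pi.single (h • o₀) 1 := by
        ext p
        simp [Pi.single_apply, inv_smul_eq_iff]
      ext p
      by_cases hp : p = h • o₀
      · subst hp
        have h2 := congrFun (hT (SemidirectProduct.inr h) (Pi.single o₀ 1)) (h • o₀)
        rw [h1] at h2
        simpa using h2
      · simp [hdiag _ _ hp, hp]
    have hlin : T = T (Pi.single o₀ 1) o₀ • LinearMap.id := by
      refine LinearMap.pi_ext' fun o => LinearMap.ext_ring ?_
      simpa using hbasis o
    exact congrArg (fun S : (O → ℂ) →ₗ[ℂ] (O → ℂ) => S f) hlin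
  have hone : 𝟙 (FDRep.of (monomialRep φ χ hχ)) ≠ 0 := by
    intro h0
    have h1 := congrArg (fun T => T.hom.hom.hom (Pi.single o₀ (1 : ℂ)) o₀) h0
    change (Pi.single o₀ (1 : ℂ) : O → ℂ) o₀ = 0 at h1
    simp at h1
  rw [finrank_eq_one_iff_of_nonzero' _ hone]
  intro T
  obtain ⟨a, ha⟩ := key T.hom.hom.hom (fun g f => by
    have h1 := congrArg (fun S => S.hom.hom f) (T.comm g)
    exact h1)
  refine ⟨a, ?_⟩
  ext o p
  exact (congrFun (ha (Pi.single o 1)) p).symm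

end monomial

open MulAction in
theorem exists_simple_finrank_eq_card_orbit {N H : Type} [Group N] [Group H] [Finite N] [Finite H]
    (φ : H →* MulAut N) (χ : N →* ℂˣ) :
    letI := charAction (A := ℂˣ) φ
    ∃ W : FDRep ℂ (N ⋊[φ] H), Simple W ∧ Module.finrank ℂ W = Nat.card (orbit H χ) := by
  let := charAction (A := ℂˣ) φ
  have : Finite (orbit H χ) := Finite.Set.finite_range _
  have := Fintype.ofFinite (orbit H χ)
  have : Nonempty (orbit H χ) := ⟨⟨χ, mem_orbit_self χ⟩⟩
  refine ⟨_, simple_monomialRep φ (O := orbit H χ) Subtype.val (fun _ _ _ => rfl)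
    Subtype.val_injective, ?_⟩
  rw [Nat.card_eq_fintype_card]
  exact Module.finrank_fintype_fun_eq_card ℂ

/-! ### Orbits of linear characters -/

/-- If a generator `σ` acts on `C` by the `q`-th power map, then `σ⁻¹` sends a linear character
`χ` to `χ ^ q`, so the orbit of `χ` has as many elements as the order of `q` modulo the order
of `χ`. -/
theorem card_orbit_eq_orderOf {C H : Type} [CommGroup C] [Group H] [Finite C] [Finite H]
    (φ : H →* MulAut C) (σ : H) (hσ : ∀ τ : H, τ ∈ Subgroup.zpowers σ) (q : ℕ)
    (hφ : ∀ x, φ σ x = x ^ q) (χ : C →* ℂˣ) :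
    letI := charAction (A := ℂˣ) φ
    Nat.card (MulAction.orbit H χ) = orderOf (q : ZMod (orderOf χ)) := by
  let := charAction (A := ℂˣ) φ
  have hsmul : ∀ ψ : C →* ℂˣ, σ⁻¹ • ψ = ψ ^ q := by
    intro ψ
    ext x
    change ((ψ (φ σ⁻¹⁻¹ x) : ℂˣ) : ℂ) = _
    rw [inv_inv, hφ, map_pow]
    rfl
  have hiter : ∀ k : ℕ, (σ⁻¹ • · : (C →* ℂˣ) → _)^[k] χ = χ ^ q ^ k := by
    intro k
    induction k with
    | zero => exact (pow_one χ).symm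
    | succ k ih =>
      rw [Function.iterate_succ_apply', ih]
      exact (hsmul _).trans (pow_mul χ (q ^ k) q).symm
  have horb : MulAction.orbit H χ = MulAction.orbit (Subgroup.zpowers σ⁻¹) χ := by
    ext ψ
    constructor
    · rintro ⟨τ, rfl⟩
      exact ⟨⟨τ, by rw [Subgroup.zpowers_inv]; exact hσ τ⟩, rfl⟩
    · rintro ⟨τ, rfl⟩
      exact ⟨τ, rfl⟩
  have : Finite (MulAction.orbit (Subgroup.zpowers σ⁻¹) χ) := Finite.Set.finite_range _
  have := Fintype.ofFinite (MulAction.orbit (Subgroup.zpowers σ⁻¹) χ)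
  rw [horb, Nat.card_eq_fintype_card, ← MulAction.minimalPeriod_eq_card]
  have hiff : ∀ k, Function.minimalPeriod (σ⁻¹ • · : (C →* ℂˣ) → _) χ ∣ k ↔
      orderOf (q : ZMod (orderOf χ)) ∣ k := by
    intro k
    rw [← Function.isPeriodicPt_iff_minimalPeriod_dvd, orderOf_dvd_iff_pow_eq_one,
      Function.IsPeriodicPt, Function.IsFixedPt, hiter]
    have h1 : χ ^ q ^ k = χ ↔ q ^ k ≡ 1 [MOD orderOf χ] := by
      have h2 := pow_eq_pow_iff_modEq (x := χ) (n := q ^ k) (m := 1)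
      rwa [pow_one] at h2
    rw [← ZMod.natCast_eq_natCast_iff] at h1
    push_cast at h1
    exact h1
  exact Nat.dvd_antisymm ((hiff _).2 dvd_rfl) ((hiff _).1 dvd_rfl)

/-- A finite commutative group is isomorphic to its dual, so Cauchy's theorem applies to the
dual. -/
theorem exists_char_orderOf_eq_prime {C : Type} [CommGroup C] [Finite C] {r : ℕ} (hr : r.Prime)
    (hrC : r ∣ Nat.card C) : ∃ χ : C →* ℂˣ, orderOf χ = r := by
  have := Fact.mk hr
  obtain ⟨f⟩ := CommGroup.monoidHom_mulEquiv_of_hasEnoughRootsOfUnity C ℂ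
  obtain ⟨x, hx⟩ := exists_prime_orderOf_dvd_card' r hrC
  exact ⟨f.symm x, by rw [MulEquiv.orderOf_eq, hx]⟩

/-- Let `q` be a Mersenne prime, `e > 1` even, `F = 𝔽_q = ZMod q`, `E = 𝔽_{q^e}`,
`Γ = Gal(E/F)`, `C ≤ Eˣ` with every prime dividing `[Eˣ : C]` dividing `q - 1` and `4 ∤ |C|`,
and `G = C ⋊ Γ`.  Then for every positive divisor `n` of `e` with `n ≠ 2`, the group `G` has an
irreducible complex representation of dimension `n`. -/
theorem mem_cd_semidirectProduct_of_dvd_of_ne_two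
    (q p e : ℕ) (hp : Nat.Prime p) (hq : q = 2 ^ p - 1) [Fact (Nat.Prime q)]
    (he : 1 < e) (heven : Even e)
    (E : Type) [Field E] [Fintype E] [Algebra (ZMod q) E]
    (hcard : Fintype.card E = q ^ e)
    (C : Subgroup Eˣ)
    (hCindex : ∀ r : ℕ, r.Prime → r ∣ C.index → r ∣ q - 1)
    (hC4 : ¬ (4 ∣ Nat.card C))
    (φ : (E ≃ₐ[ZMod q] E) →* MulAut C)
    (hφ : ∀ (τ : E ≃ₐ[ZMod q] E) (x : C), ((φ τ x : Eˣ) : E) = τ ((x : Eˣ) : E))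
    (n : ℕ) (hn : 0 < n) (hne : n ∣ e) (hn2 : n ≠ 2) :
    ∃ W : FDRep ℂ (SemidirectProduct C (E ≃ₐ[ZMod q] E) φ),
      Simple W ∧ Module.finrank ℂ W = n := by
  have hq3 : 3 ≤ q := by
    have h1 : 2 ^ 2 ≤ 2 ^ p := Nat.pow_le_pow_right (by norm_num) hp.two_le
    omega
  obtain ⟨χ, hχ⟩ : ∃ χ : C →* ℂˣ, orderOf (q : ZMod (orderOf χ)) = n := by
    rcases (by omega : n = 1 ∨ 3 ≤ n) with rfl | hn3
    · refine ⟨1, ?_⟩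
      rw [orderOf_one]
      exact orderOf_eq_one_iff.2 (Subsingleton.elim _ _)
    obtain ⟨r, hr, hrn⟩ := exists_prime_orderOf_eq hq3 hn3
    -- `q ^ e = 1` in `ZMod r`, as the order `n` of `q` divides `e`
    have hrE : r ∣ Nat.card Eˣ := by
      rw [Nat.card_units, Nat.card_eq_fintype_card, hcard,
        ← ZMod.natCast_eq_zero_iff, Nat.cast_sub (Nat.one_le_pow _ _ (by omega))]
      push_cast
      rw [orderOf_dvd_iff_pow_eq_one.1 (hrn ▸ hne), sub_self]
    have hrC : r ∣ Nat.card C := by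
      rw [← C.card_mul_index, hr.dvd_mul] at hrE
      refine hrE.resolve_right fun hri => ?_
      -- otherwise `q = 1` in `ZMod r`, and `q` would have order `1`
      have h1 := hCindex r hr hri
      rw [← ZMod.natCast_eq_zero_iff, Nat.cast_sub (by omega), sub_eq_zero, Nat.cast_one] at h1
      rw [h1, orderOf_one] at hrn
      omega
    obtain ⟨χ, hχ⟩ := exists_char_orderOf_eq_prime hr hrC
    exact ⟨χ, by rw [hχ, hrn]⟩
  have hfrob : ∀ τ : E ≃ₐ[ZMod q] E,
      τ ∈ Subgroup.zpowers (FiniteField.frobeniusAlgEquivOfAlgebraic (ZMod q) E) := by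
    intro τ
    obtain ⟨k, hk⟩ := (FiniteField.bijective_frobeniusAlgEquivOfAlgebraic_pow (ZMod q) E).2 τ
    exact ⟨(k : ℕ), by simpa using hk⟩
  obtain ⟨W, hW, hdim⟩ := exists_simple_finrank_eq_card_orbit φ χ
  refine ⟨W, hW, hdim.trans ?_⟩
  rw [card_orbit_eq_orderOf φ _ hfrob q (fun x => ?_) χ, hχ]
  ext
  rw [hφ, FiniteField.coe_frobeniusAlgEquivOfAlgebraic, ZMod.card]
  rfl
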